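/- The maximum cardinality of an antichain in the symmetric group S_n under absolute order equals the largest unsigned Stirling number of the first kind: max{|A| : A an antichain in (S_n, ≤_T)} = max over 1 ≤ k ≤ n of s(n, k). In particular, some level {π ∈ S_n : c(π) = k} is an antichain of maximum cardinality. -/

import Mathlib

/-- The number of cycles of a permutation of `{1,…,n}` (here `Fin n`),
counting fixed points as cycles of length one. -/
def cycleCount {n : ℕ} (π : Equiv.Perm (Fin n)) : ℕ :=
  π.cycleType.card + (Finset.univ.filter fun x => π x = x).card

/-- The absolute length `ℓ_T(π) = n - c(π)`. -/
def absLength {n : ℕ} (π : Equiv.Perm (Fin n)) : ℕ :=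
  n - cycleCount π

/-- The absolute order on `S_n`: `σ ≤_T π` iff `ℓ_T(π) = ℓ_T(σ) + ℓ_T(σ⁻¹ π)`. -/
def absLe {n : ℕ} (σ π : Equiv.Perm (Fin n)) : Prop :=
  absLength π = absLength σ + absLength (σ⁻¹ * π)

/-- The unsigned Stirling number of the first kind `s(n,k)`: the number of
permutations of an `n`-element set with exactly `k` cycles (fixed points
counting as cycles of length one). -/
def stirlingFirst (n k : ℕ) : ℕ :=
  (Finset.univ.filter fun π : Equiv.Perm (Fin n) => cycleCount π = k).card

open Equiv Equiv.Perm in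
theorem cycleCount_add_support {n : ℕ} (π : Equiv.Perm (Fin n)) :
    cycleCount π + π.support.card = π.cycleType.card + n := by
  unfold cycleCount
  have h := Finset.card_filter_add_card_filter_not (s := (Finset.univ : Finset (Fin n)))
    (fun x => π x = x)
  have h2 : (Finset.univ.filter fun x => ¬ π x = x) = π.support := by
    ext x; simp
  rw [h2, Finset.card_univ, Fintype.card_fin] at h
  omega

open Equiv Equiv.Perm in
theorem cycleCount_swap_mul {n : ℕ} (π : Equiv.Perm (Fin n)) (x : Fin n) (hx : π x ≠ x) :
    cycleCount (swap x (π x) * π) = cycleCount π + 1 := by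
  have hc : IsCycle (cycleOf π x) := isCycle_cycleOf π hx
  have hmem : cycleOf π x ∈ cycleFactorsFinset π := by
    rw [cycleOf_mem_cycleFactorsFinset_iff, mem_support]; exact hx
  have hd := (disjoint_mul_inv_of_mem_cycleFactorsFinset hmem).symm
  have hcx : cycleOf π x x = π x := cycleOf_apply_self π x
  obtain ⟨c, hcdef⟩ : ∃ c, c = cycleOf π x := ⟨_, rfl⟩
  rw [← hcdef] at hc hd hcx
  obtain ⟨d, hddef⟩ : ∃ d, d = π * c⁻¹ := ⟨_, rfl⟩
  rw [← hddef] at hd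
  have hπ : π = c * d := by
    rw [hd.commute.eq, hddef]; simp
  have e0 := cycleCount_add_support π
  have e1 := cycleCount_add_support (swap x (π x) * π)
  have t0 : π.cycleType.card = 1 + d.cycleType.card := by
    rw [hπ, hd.cycleType_mul, Multiset.card_add, hc.cycleType]; simp
  have s0 : π.support.card = c.support.card + d.support.card := by
    rw [hπ, hd.card_support_mul]
  have hcx' : c x ≠ x := by rw [hcx]; exact hx
  by_cases hcc : c (c x) = x
  · have hsw := hc.eq_swap_of_apply_apply_eq_self hcx' hcc
    have h3 : swap x (π x) * π = d := by
      have hc2 : c * c = 1 := by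
        have h5 := swap_mul_self x (c x)
        rwa [← hsw] at h5
      rw [← hcx, ← hsw, hπ, ← mul_assoc, hc2, one_mul]
    have h4 : c.support.card = 2 := by
      rw [hsw]; exact card_support_swap hcx'.symm
    rw [h3] at e1 ⊢
    omega
  · have h3 : swap x (π x) * π = (swap x (c x) * c) * d := by
      rw [← hcx]; nth_rewrite 1 [hπ]; rw [mul_assoc]
    have hc' := hc.swap_mul hcx' hcc
    have hs := support_swap_mul_eq c x hcc
    have hd' : Disjoint (swap x (c x) * c) d := by
      rw [disjoint_iff_disjoint_support] at hd ⊢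
      rw [hs]
      exact hd.mono_left Finset.sdiff_subset
    have h4 : (swap x (c x) * c).support.card + 1 = c.support.card := by
      rw [hs, Finset.sdiff_singleton_eq_erase]
      exact Finset.card_erase_add_one (mem_support.2 hcx')
    rw [h3] at e1 ⊢
    rw [hd'.cycleType_mul, Multiset.card_add, hc'.cycleType, hd'.card_support_mul] at e1
    simp at e1
    omega

open Equiv Equiv.Perm in
/-- The permutation `(0 p) ∘ e` of `Fin (n+1)`. -/
def dec {n : ℕ} (p : Fin (n+1)) (e : Equiv.Perm (Fin n)) : Equiv.Perm (Fin (n+1)) :=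
  decomposeFin.symm (p, e)

open Equiv Equiv.Perm in
theorem dec_zero_eq {n : ℕ} (e : Equiv.Perm (Fin n)) :
    dec 0 e = e.extendDomain (finSuccAboveEquiv (0 : Fin (n+1))) := by
  ext x
  refine Fin.cases ?_ (fun i => ?_) x
  · rw [extendDomain_apply_not_subtype _ _ (by simp)]
    simp [dec]
  · have hi : i.succ = ((finSuccAboveEquiv (0 : Fin (n+1))) i : Fin (n+1)) := by
      simp [finSuccAboveEquiv_apply]
    have h1 : e.extendDomain (finSuccAboveEquiv (0 : Fin (n+1))) i.succ = (e i).succ := by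
      rw [hi, extendDomain_apply_image]; simp [finSuccAboveEquiv_apply]
    rw [h1]; simp [dec]

open Equiv Equiv.Perm in
theorem dec_eq {n : ℕ} (p : Fin (n+1)) (e : Equiv.Perm (Fin n)) :
    dec p e = swap 0 p * dec 0 e := by
  ext x
  refine Fin.cases ?_ (fun i => ?_) x <;> simp [dec]

theorem dec_zero_mul {n : ℕ} (e e' : Equiv.Perm (Fin n)) :
    dec 0 (e * e') = dec 0 e * dec 0 e' := by
  ext x
  refine Fin.cases ?_ (fun i => ?_) x <;> simp [dec]

theorem dec_zero_one {n : ℕ} : dec 0 (1 : Equiv.Perm (Fin n)) = 1 := by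
  simp [dec]; rfl

theorem dec_zero_inv {n : ℕ} (e : Equiv.Perm (Fin n)) :
    dec 0 e⁻¹ = (dec 0 e)⁻¹ := by
  rw [eq_inv_iff_mul_eq_one, ← dec_zero_mul, inv_mul_cancel, dec_zero_one]

theorem cycleCount_dec_zero {n : ℕ} (e : Equiv.Perm (Fin n)) :
    cycleCount (dec 0 e) = cycleCount e + 1 := by
  have e0 := cycleCount_add_support e
  have e1 := cycleCount_add_support (dec 0 e)
  rw [dec_zero_eq] at e1 ⊢
  rw [Equiv.Perm.cycleType_extendDomain, Equiv.Perm.card_support_extend_domain] at e1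
  omega

theorem cycleCount_dec {n : ℕ} (p : Fin (n+1)) (e : Equiv.Perm (Fin n)) (hp : p ≠ 0) :
    cycleCount (dec p e) = cycleCount e := by
  have h0 : dec p e 0 = p := by simp [dec]
  have h := cycleCount_swap_mul (dec p e) 0 (by rw [h0]; exact hp)
  rw [h0] at h
  nth_rewrite 1 [dec_eq] at h
  rw [← mul_assoc, Equiv.swap_mul_self, one_mul, cycleCount_dec_zero] at h
  omega

theorem exists_dec {n : ℕ} (π : Equiv.Perm (Fin (n+1))) : ∃ p e, π = dec p e :=
  ⟨(Equiv.Perm.decomposeFin π).1, (Equiv.Perm.decomposeFin π).2, by simp [dec]⟩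

theorem cycleCount_le {n : ℕ} (π : Equiv.Perm (Fin n)) : cycleCount π ≤ n := by
  induction n with
  | zero => have := cycleCount_add_support π; simp [Subsingleton.elim π 1] at *; omega
  | succ n ih =>
    obtain ⟨p, e, rfl⟩ := exists_dec π
    have := ih e
    by_cases hp : p = 0
    · subst hp; rw [cycleCount_dec_zero]; omega
    · rw [cycleCount_dec p e hp]; omega

theorem cycleCount_pos {n : ℕ} (hn : 1 ≤ n) (π : Equiv.Perm (Fin n)) : 1 ≤ cycleCount π := by
  induction n with
  | zero => omega
  | succ n ih =>
    obtain ⟨p, e, rfl⟩ := exists_dec π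
    by_cases hp : p = 0
    · subst hp; rw [cycleCount_dec_zero]; omega
    · rw [cycleCount_dec p e hp]
      apply ih
      by_contra h
      have : n = 0 := by omega
      subst this
      exact hp (Fin.ext (by simp))

theorem absLength_dec_zero {n : ℕ} (e : Equiv.Perm (Fin n)) :
    absLength (dec 0 e) = absLength e := by
  unfold absLength; rw [cycleCount_dec_zero]; omega

theorem absLength_dec {n : ℕ} (p : Fin (n+1)) (e : Equiv.Perm (Fin n)) (hp : p ≠ 0) :
    absLength (dec p e) = absLength e + 1 := by
  unfold absLength; rw [cycleCount_dec p e hp]; have := cycleCount_le e; omega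

theorem absLength_one {n : ℕ} : absLength (1 : Equiv.Perm (Fin n)) = 0 := by
  have := cycleCount_add_support (1 : Equiv.Perm (Fin n))
  unfold absLength
  simp at this
  omega

theorem eq_one_of_absLength {n : ℕ} (π : Equiv.Perm (Fin n)) (h : absLength π = 0) : π = 1 := by
  induction n with
  | zero => exact Subsingleton.elim _ _
  | succ n ih =>
    obtain ⟨p, e, rfl⟩ := exists_dec π
    by_cases hp : p = 0
    · subst hp
      rw [absLength_dec_zero] at h
      rw [ih e h, dec_zero_one]
    · rw [absLength_dec p e hp] at h; omega

theorem level_antichain {n : ℕ} (k : ℕ) :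
    IsAntichain absLe {π : Equiv.Perm (Fin n) | cycleCount π = k} := by
  intro σ hσ π hπ hne hle
  simp only [Set.mem_ofPred_eq] at hσ hπ
  unfold absLe at hle
  have h0 : absLength π = absLength σ := by unfold absLength; rw [hσ, hπ]
  have := eq_one_of_absLength (σ⁻¹ * π) (by omega)
  exact hne (inv_mul_eq_one.1 this)

/-- The product-of-claws order on permutations. -/
def clawLe : (n : ℕ) → Equiv.Perm (Fin n) → Equiv.Perm (Fin n) → Prop
  | 0, _, _ => True
  | n+1, σ, π => ((Equiv.Perm.decomposeFin σ).1 = 0 ∨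
      (Equiv.Perm.decomposeFin σ).1 = (Equiv.Perm.decomposeFin π).1) ∧
      clawLe n (Equiv.Perm.decomposeFin σ).2 (Equiv.Perm.decomposeFin π).2

theorem clawLe_dec {n : ℕ} (p p' : Fin (n+1)) (e e' : Equiv.Perm (Fin n)) :
    clawLe (n+1) (dec p e) (dec p' e') ↔ (p = 0 ∨ p = p') ∧ clawLe n e e' := by
  simp [clawLe, dec]

theorem clawLe_refl {n : ℕ} (σ : Equiv.Perm (Fin n)) : clawLe n σ σ := by
  induction n with
  | zero => trivial
  | succ n ih =>
    obtain ⟨p, e, rfl⟩ := exists_dec σ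
    rw [clawLe_dec]
    exact ⟨Or.inr rfl, ih e⟩

theorem clawLe_trans {n : ℕ} (σ τ π : Equiv.Perm (Fin n)) (h1 : clawLe n σ τ)
    (h2 : clawLe n τ π) : clawLe n σ π := by
  induction n with
  | zero => trivial
  | succ n ih =>
    obtain ⟨p, e, rfl⟩ := exists_dec σ
    obtain ⟨q, f, rfl⟩ := exists_dec τ
    obtain ⟨r, g, rfl⟩ := exists_dec π
    rw [clawLe_dec] at *
    refine ⟨?_, ih _ _ _ h1.2 h2.2⟩
    rcases h1.1 with h | h
    · exact Or.inl h
    · rw [h]; exact h2.1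

open Equiv Equiv.Perm in
theorem absLe_of_clawLe {n : ℕ} (σ π : Equiv.Perm (Fin n)) (h : clawLe n σ π) : absLe σ π := by
  induction n with
  | zero => rw [Subsingleton.elim σ 1, Subsingleton.elim π 1]; simp [absLe, absLength]
  | succ n ih =>
    obtain ⟨p, e, rfl⟩ := exists_dec σ
    obtain ⟨q, f, rfl⟩ := exists_dec π
    rw [clawLe_dec] at h
    have hi := ih _ _ h.2
    unfold absLe at hi ⊢
    by_cases hpq : p = q
    · subst hpq
      have h1 : (dec p e)⁻¹ * dec p f = dec 0 (e⁻¹ * f) := by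
        rw [dec_eq p e, dec_eq p f, dec_zero_mul, dec_zero_inv]
        simp [mul_assoc]
      rw [h1, absLength_dec_zero]
      by_cases hp : p = 0
      · subst hp; rw [absLength_dec_zero, absLength_dec_zero]; exact hi
      · rw [absLength_dec p _ hp, absLength_dec p _ hp]; omega
    · have hp : p = 0 := by tauto
      subst hp
      have h1 : (dec 0 e)⁻¹ * dec q f = dec ((dec 0 e)⁻¹ q) (e⁻¹ * f) := by
        rw [dec_eq q f, dec_eq _ (e⁻¹ * f), dec_zero_mul, dec_zero_inv, ← mul_assoc, ← mul_assoc,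
          mul_swap_eq_swap_mul]
        congr 3
      have h2 : (dec 0 e)⁻¹ q ≠ 0 := by
        intro h3
        rw [inv_eq_iff_eq] at h3
        apply hpq; rw [h3]; simp [dec]
      rw [h1, absLength_dec _ _ h2, absLength_dec_zero, absLength_dec q f (Ne.symm hpq)]
      omega

/-- Sum of `f` over the permutations of absolute length `k`. -/
def levelSum (n k : ℕ) (f : Equiv.Perm (Fin n) → ℕ) : ℕ :=
  ∑ π with absLength π = k, f π

theorem sum_dec {n : ℕ} (f : Equiv.Perm (Fin (n+1)) → ℕ) :
    ∑ π, f π = ∑ e, f (dec 0 e) + ∑ j : Fin n, ∑ e, f (dec j.succ e) := by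
  rw [← Equiv.sum_comp Equiv.Perm.decomposeFin.symm, Fintype.sum_prod_type, Fin.sum_univ_succ]
  rfl

theorem levelSum_zero (n : ℕ) (f : Equiv.Perm (Fin (n+1)) → ℕ) :
    levelSum (n+1) 0 f = levelSum n 0 (fun e => f (dec 0 e)) := by
  simp only [levelSum, Finset.sum_filter]
  rw [sum_dec]
  simp [absLength_dec_zero, absLength_dec _ _ (Fin.succ_ne_zero _)]

theorem levelSum_succ (n k : ℕ) (f : Equiv.Perm (Fin (n+1)) → ℕ) :
    levelSum (n+1) (k+1) f = levelSum n (k+1) (fun e => f (dec 0 e)) +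
      ∑ j : Fin n, levelSum n k (fun e => f (dec j.succ e)) := by
  simp only [levelSum, Finset.sum_filter]
  rw [sum_dec]
  simp [absLength_dec_zero, absLength_dec _ _ (Fin.succ_ne_zero _)]

/-- Level sizes. -/
def lev (n k : ℕ) : ℕ := levelSum n k (fun _ => 1)

theorem lev_succ_zero (n : ℕ) : lev (n+1) 0 = lev n 0 := levelSum_zero n _

theorem lev_succ_succ (n k : ℕ) : lev (n+1) (k+1) = lev n (k+1) + n * lev n k := by
  unfold lev; rw [levelSum_succ]; simp

theorem lev_eq (n k : ℕ) : lev n k =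
    (Finset.univ.filter fun π : Equiv.Perm (Fin n) => absLength π = k).card := by
  simp [lev, levelSum]

theorem lev_zero_zero : lev 0 0 = 1 := by
  rw [lev_eq]; simp [absLength]

theorem lev_zero_succ (k : ℕ) : lev 0 (k+1) = 0 := by
  rw [lev_eq]; simp [absLength]

theorem lev_bot (n : ℕ) : lev n 0 = 1 := by
  induction n with
  | zero => exact lev_zero_zero
  | succ n ih => rw [lev_succ_zero, ih]

theorem lev_pf (n : ℕ) : ∀ i j, i ≤ j → lev n i * lev n (j+1) ≤ lev n (i+1) * lev n j := by
  induction n with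
  | zero => intro i j _; simp [lev_zero_succ]
  | succ n ih =>
    intro i j hij
    rcases i with _ | i
    · rcases j with _ | j
      · simp only [lev_succ_zero, lev_succ_succ]; nlinarith
      · simp only [lev_succ_zero, lev_succ_succ, lev_bot, mul_one, one_mul]
        have h1 := ih 0 (j+1) (by omega)
        have h2 := ih 0 j (by omega)
        simp only [lev_bot, zero_add, one_mul] at *
        nlinarith [Nat.zero_le (lev n 1 * lev n j * n), Nat.zero_le (n * n * lev n j)]
    · obtain ⟨j, rfl⟩ : ∃ j', j = j' + 1 := ⟨j - 1, by omega⟩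
      simp only [lev_succ_succ]
      have h1 := ih (i+1) (j+1) (by omega)
      have h2 := ih i j (by omega)
      have h3 : lev n i * lev n (j+1+1) ≤ lev n (i+1+1) * lev n j := by
        rcases Nat.eq_or_lt_of_le hij with h | h
        · obtain rfl : i = j := by omega
          exact le_of_eq (mul_comm _ _)
        · exact (ih i (j+1) (by omega)).trans (ih (i+1) j (by omega))
      have h4 := Nat.mul_le_mul_left n h3
      have h5 := Nat.mul_le_mul_left (n*n) h2
      nlinarith

theorem lev_zero_of (n k : ℕ) (h : lev n k = 0) : lev n (k+1) = 0 := by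
  have := lev_pf n 0 k (by omega)
  rw [lev_bot, h] at this
  omega

theorem numeric (a Nm N Np U U' V V' : ℕ) (hlc : Nm * Np ≤ N * N) (h0 : N = 0 → Np = 0)
    (h1 : U * Np ≤ U' * N) (h2 : V * N ≤ V' * Nm) (h3 : a * U ≤ V') :
    (U + V) * (Np + a * N) ≤ (U' + V') * (N + a * Nm) := by
  rcases Nat.eq_zero_or_pos N with h | h
  · simp [h, h0 h]
  · have key : V * Np + a * U * N ≤ V' * N + a * U' * Nm := by
      refine Nat.le_of_mul_le_mul_left ?_ h
      zify at *
      have k1 := mul_le_mul_of_nonneg_left h1 (show (0:ℤ) ≤ a * Nm by positivity)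
      have k2 := mul_le_mul_of_nonneg_left h2 (show (0:ℤ) ≤ Np by positivity)
      have k3 := mul_nonneg (sub_nonneg.2 h3) (sub_nonneg.2 hlc)
      nlinarith
    have := Nat.mul_le_mul_left a h2
    nlinarith

theorem levelSum_mono (n k : ℕ) (f g : Equiv.Perm (Fin n) → ℕ) (h : ∀ e, f e ≤ g e) :
    levelSum n k f ≤ levelSum n k g := Finset.sum_le_sum fun e _ => h e

theorem levelSum_eq_zero (n k : ℕ) (f : Equiv.Perm (Fin n) → ℕ) (h : lev n k = 0) :
    levelSum n k f = 0 := by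
  rw [lev_eq, Finset.card_eq_zero] at h
  unfold levelSum; rw [h]; simp

/-- Normalized matching property, in the form: averages of monotone functions increase. -/
theorem avg_mono (n : ℕ) : ∀ (k : ℕ) (f : Equiv.Perm (Fin n) → ℕ),
    (∀ σ π, clawLe n σ π → f σ ≤ f π) →
    levelSum n k f * lev n (k+1) ≤ levelSum n (k+1) f * lev n k := by
  induction n with
  | zero => intro k f _; simp [lev_zero_succ]
  | succ n ih =>
    intro k f hf
    have hg : ∀ p : Fin (n+1), ∀ σ π, clawLe n σ π → f (dec p σ) ≤ f (dec p π) :=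
      fun p σ π h => hf _ _ ((clawLe_dec _ _ _ _).2 ⟨Or.inr rfl, h⟩)
    have h0 : ∀ p : Fin (n+1), ∀ e, f (dec 0 e) ≤ f (dec p e) :=
      fun p e => hf _ _ ((clawLe_dec _ _ _ _).2 ⟨Or.inl rfl, clawLe_refl e⟩)
    have h3 : ∀ k, n * levelSum n k (fun e => f (dec 0 e)) ≤
        ∑ j : Fin n, levelSum n k (fun e => f (dec j.succ e)) := by
      intro k
      calc n * levelSum n k (fun e => f (dec 0 e))
          = ∑ j : Fin n, levelSum n k (fun e => f (dec 0 e)) := by simp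
        _ ≤ _ := Finset.sum_le_sum fun j _ => levelSum_mono _ _ _ _ (h0 j.succ)
    rcases k with _ | k
    · rw [levelSum_zero, levelSum_succ, lev_succ_zero, lev_succ_succ]
      have := numeric n 0 (lev n 0) (lev n 1) (levelSum n 0 (fun e => f (dec 0 e)))
        (levelSum n 1 (fun e => f (dec 0 e))) 0
        (∑ j : Fin n, levelSum n 0 (fun e => f (dec j.succ e))) (by simp) (lev_zero_of n 0)
        (ih 0 _ (hg 0)) (by simp) (h3 0)
      simpa using this
    · rw [levelSum_succ, levelSum_succ, lev_succ_succ, lev_succ_succ]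
      refine numeric n (lev n k) (lev n (k+1)) (lev n (k+1+1)) _ _ _ _
        (lev_pf n k (k+1) (by omega)) (lev_zero_of n (k+1))
        (ih (k+1) _ (hg 0)) ?_ (h3 (k+1))
      rw [Finset.sum_mul, Finset.sum_mul]
      exact Finset.sum_le_sum fun j _ => ih k _ (hg j.succ)

open Classical in
/-- Indicator of the up-set generated by the part of `A` of length at most `k`. -/
noncomputable def upInd {n : ℕ} (A : Finset (Equiv.Perm (Fin n))) (k : ℕ)
    (π : Equiv.Perm (Fin n)) : ℕ :=
  if ∃ a ∈ A, absLength a ≤ k ∧ clawLe n a π then 1 else 0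

open Classical in
theorem lym_aux {n : ℕ} (A : Finset (Equiv.Perm (Fin n)))
    (hA : IsAntichain absLe (A : Set (Equiv.Perm (Fin n)))) (k : ℕ) (hk : 0 < lev n k) :
    ∑ i ∈ Finset.range (k+1), ((A.filter fun π => absLength π = i).card : ℚ) / lev n i ≤
      (levelSum n k (upInd A k) : ℚ) / lev n k := by
  have hcard : ∀ k, (A.filter fun π => absLength π = k).card =
      levelSum n k (fun π => if π ∈ A then 1 else 0) := by
    intro k
    simp only [levelSum, Finset.sum_boole, Finset.filter_filter, Nat.cast_id]
    congr 1; ext π; simp [and_comm]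
  induction k with
  | zero =>
    simp only [zero_add, Finset.range_one, Finset.sum_singleton]
    gcongr
    rw [hcard]
    refine Finset.sum_le_sum fun e he => ?_
    rw [Finset.mem_filter] at he
    by_cases heA : e ∈ A
    · rw [if_pos heA, upInd, if_pos ⟨e, heA, by omega, clawLe_refl e⟩]
    · rw [if_neg heA]; exact Nat.zero_le _
  | succ k ih =>
    have hk' : 0 < lev n k := Nat.pos_of_ne_zero fun h => by
      have := lev_zero_of n k h; omega
    have h1 := ih hk'
    have h2 := avg_mono n k (upInd A k) (by
      intro σ π h
      unfold upInd
      split_ifs with h3 h4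
      · exact le_rfl
      · obtain ⟨a, ha, hak, hle⟩ := h3
        exact absurd ⟨a, ha, hak, clawLe_trans _ _ _ hle h⟩ h4
      · exact Nat.zero_le _
      · exact le_rfl)
    have h3 : (levelSum n k (upInd A k) : ℚ) / lev n k ≤
        (levelSum n (k+1) (upInd A k) : ℚ) / lev n (k+1) := by
      rw [div_le_div_iff₀ (by exact_mod_cast hk') (by exact_mod_cast hk)]
      exact_mod_cast h2
    have h4 : (A.filter fun π => absLength π = k+1).card + levelSum n (k+1) (upInd A k) ≤
        levelSum n (k+1) (upInd A (k+1)) := by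
      rw [hcard]
      unfold levelSum
      rw [← Finset.sum_add_distrib]
      refine Finset.sum_le_sum fun π hπ => ?_
      rw [Finset.mem_filter] at hπ
      unfold upInd
      by_cases hπA : π ∈ A
      · have n1 : ¬ ∃ a ∈ A, absLength a ≤ k ∧ clawLe n a π := by
          rintro ⟨a, ha, hak, hle⟩
          exact hA ha hπA (by rintro rfl; omega) (absLe_of_clawLe _ _ hle)
        rw [if_pos hπA, if_neg n1, if_pos ⟨π, hπA, by omega, clawLe_refl π⟩]
      · rw [if_neg hπA, zero_add]
        split_ifs with h5 h6
        · exact le_rfl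
        · obtain ⟨a, ha, hak, hle⟩ := h5
          exact absurd ⟨a, ha, by omega, hle⟩ h6
        · exact Nat.zero_le _
        · exact le_rfl
    rw [Finset.sum_range_succ]
    have h5 : ((A.filter fun π => absLength π = k+1).card : ℚ) / lev n (k+1) +
        (levelSum n (k+1) (upInd A k) : ℚ) / lev n (k+1) ≤
        (levelSum n (k+1) (upInd A (k+1)) : ℚ) / lev n (k+1) := by
      rw [← add_div]
      gcongr
      exact_mod_cast h4
    linarith

theorem lym {n : ℕ} (A : Finset (Equiv.Perm (Fin n)))
    (hA : IsAntichain absLe (A : Set (Equiv.Perm (Fin n)))) (k : ℕ) :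
    ∑ i ∈ Finset.range (k+1), ((A.filter fun π => absLength π = i).card : ℚ) / lev n i ≤ 1 := by
  induction k with
  | zero =>
    refine (lym_aux A hA 0 (by simp [lev_bot])).trans (div_le_one_of_le₀ ?_ (by positivity))
    exact_mod_cast levelSum_mono _ _ _ _ fun e => by unfold upInd; split_ifs <;> simp
  | succ k ih =>
    rcases Nat.eq_zero_or_pos (lev n (k+1)) with h | h
    · rw [Finset.sum_range_succ, h]; simpa using ih
    · refine (lym_aux A hA (k+1) h).trans (div_le_one_of_le₀ ?_ (by positivity))
      exact_mod_cast levelSum_mono _ _ _ _ fun e => by unfold upInd; split_ifs <;> simp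

theorem antichain_card_le {n : ℕ} (A : Finset (Equiv.Perm (Fin n)))
    (hA : IsAntichain absLe (A : Set (Equiv.Perm (Fin n)))) (M : ℕ) (hM : ∀ k, lev n k ≤ M) :
    A.card ≤ M := by
  have h := lym A hA n
  have h1 : A.card = ∑ i ∈ Finset.range (n+1), (A.filter fun π => absLength π = i).card :=
    Finset.card_eq_sum_card_fiberwise fun π _ => by
      simp only [Finset.coe_range, Set.mem_Iio, absLength]; omega
  have h2 : (A.card : ℚ) ≤ ∑ i ∈ Finset.range (n+1),
      M * (((A.filter fun π => absLength π = i).card : ℚ) / lev n i) := by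
    rw [h1]; push_cast
    refine Finset.sum_le_sum fun i _ => ?_
    rcases Nat.eq_zero_or_pos (lev n i) with h0 | h0
    · have h3 : (A.filter fun π => absLength π = i).card ≤ lev n i := by
        rw [lev_eq]; exact Finset.card_le_card (Finset.filter_subset_filter _ (Finset.subset_univ _))
      have h4 : (A.filter fun π => absLength π = i).card = 0 := by omega
      rw [h4]; simp
    · have h5 : (lev n i : ℚ) ≤ M := by exact_mod_cast hM i
      have h6 : (0:ℚ) < lev n i := by exact_mod_cast h0
      rw [mul_div_assoc', le_div_iff₀ h6, mul_comm]
      gcongr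
  rw [← Finset.mul_sum] at h2
  have h7 : (A.card : ℚ) ≤ M := by
    refine h2.trans ?_
    have : (0:ℚ) ≤ M := by positivity
    nlinarith
  exact_mod_cast h7

/-- The maximum cardinality of an antichain in `S_n` under absolute order
equals the largest unsigned Stirling number of the first kind
`max_{1 ≤ k ≤ n} s(n,k)`; in particular some level `{π : c(π) = k}` is an
antichain of maximum cardinality. -/
theorem max_antichain_eq_max_stirling (n : ℕ) (hn : 1 ≤ n) :
    IsGreatest {m : ℕ | ∃ A : Finset (Equiv.Perm (Fin n)),
        IsAntichain absLe (A : Set (Equiv.Perm (Fin n))) ∧ A.card = m}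
      ((Finset.Icc 1 n).sup fun k => stirlingFirst n k) ∧
    ∃ k ∈ Finset.Icc 1 n,
      IsAntichain absLe {π : Equiv.Perm (Fin n) | cycleCount π = k} ∧
      (Finset.univ.filter fun π : Equiv.Perm (Fin n) => cycleCount π = k).card =
        (Finset.Icc 1 n).sup fun k => stirlingFirst n k := by
  have hle : ∀ k, lev n k ≤ (Finset.Icc 1 n).sup fun k => stirlingFirst n k := by
    intro k
    rcases Nat.lt_or_ge k n with h | h
    · refine le_trans (le_of_eq ?_)
        (Finset.le_sup (f := fun k => stirlingFirst n k)
          (Finset.mem_Icc.2 ⟨(by omega : 1 ≤ n - k), Nat.sub_le n k⟩))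
      rw [lev_eq, stirlingFirst]
      congr 1
      ext π
      have h1 := cycleCount_le π
      simp only [Finset.mem_filter, Finset.mem_univ, true_and]
      unfold absLength
      omega
    · refine le_trans (le_of_eq ?_) (Nat.zero_le _)
      rw [lev_eq, Finset.card_eq_zero, Finset.filter_eq_empty_iff]
      intro π _
      have := cycleCount_pos hn π
      unfold absLength
      omega
  obtain ⟨k, hk, hsup⟩ := Finset.exists_mem_eq_sup (Finset.Icc 1 n)
    ⟨1, Finset.mem_Icc.2 ⟨le_rfl, hn⟩⟩ (fun k => stirlingFirst n k)
  refine ⟨⟨⟨Finset.univ.filter fun π : Equiv.Perm (Fin n) => cycleCount π = k, ?_, ?_⟩, ?_⟩,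
    k, hk, level_antichain k, ?_⟩
  · simpa using level_antichain k
  · rw [hsup]; rfl
  · rintro m ⟨A, hA, rfl⟩
    exact antichain_card_le A hA _ hle
  · rw [hsup]; rfl
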